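/- Let Γ be a valued structure with a finite domain. Then there exists a valued structure Δ with a finite domain and the same signature as Γ such that Δ is a core and Δ is fractionally homomorphically equivalent to Γ. -/

import Mathlib

open scoped ENNReal NNReal

/-- The value space `ℚ ∪ {∞}`. -/
abbrev QInf : Type := WithTop ℚ

/-- The embedding of `ℚ ∪ {∞}` into the extended reals. -/
noncomputable def QInf.toE (x : QInf) : EReal :=
  WithTop.recTopCoe ⊤ (fun q : ℚ => ((q : ℝ) : EReal)) x

/-- A relational signature: a collection of relation symbols with arities. -/
structure Signature where
  symbols : Type
  arity : symbols → ℕ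

/-- A valued `τ`-structure with domain `C`. -/
def VStruct (τ : Signature) (C : Type) : Type :=
  ∀ s : τ.symbols, (Fin (τ.arity s) → C) → QInf

/-- A probability distribution on a finite type, given by its weight function. -/
def FinDist {β : Type} [Fintype β] (w : β → ℝ≥0) : Prop :=
  ∑ f : β, w f = 1

/-- Over a finite domain, a fractional operation (given by its weight function `w`)
improves a `k`-ary valued relation `R`:
`Σ_f w(f)·R(f(a^1,…,a^ℓ)) ≤ (1/ℓ)·Σ_j R(a^j)` for all `a^1,…,a^ℓ ∈ C^k`
(where `0·∞ = 0`, computed in the extended reals). -/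
def FinImproves {C : Type} [Fintype C] [DecidableEq C] {ℓ k : ℕ}
    (w : ((Fin ℓ → C) → C) → ℝ≥0) (R : (Fin k → C) → QInf) : Prop :=
  ∀ a : Fin ℓ → Fin k → C,
    (∑ f : (Fin ℓ → C) → C,
        (((w f : ℝ)) : EReal) * QInf.toE (R fun i => f fun j => a j i)) ≤
      (((ℓ : ℝ)⁻¹ : ℝ) : EReal) * ∑ j : Fin ℓ, QInf.toE (R (a j))

/-- A fractional polymorphism of a valued structure over a finite domain: a probability
distribution on the `ℓ`-ary operations improving every valued relation of `Γ`. -/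
def FinFracPol {τ : Signature} {C : Type} [Fintype C] [DecidableEq C]
    (Γ : VStruct τ C) {ℓ : ℕ} (w : ((Fin ℓ → C) → C) → ℝ≥0) : Prop :=
  FinDist w ∧ ∀ s : τ.symbols, FinImproves w (Γ s)

/-- A fractional homomorphism from `Δ` (domain `D`) to `Γ` (domain `C`) over finite
domains: a probability distribution `ν` on the maps `D → C` with
`Σ_g ν(g)·R^Γ(g(a)) ≤ R^Δ(a)` for every symbol and tuple. -/
def FinFracHom {τ : Signature} {D C : Type} [Fintype D] [DecidableEq D] [Fintype C]
    (Δ : VStruct τ D) (Γ : VStruct τ C) (ν : (D → C) → ℝ≥0) : Prop :=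
  FinDist ν ∧
    ∀ (s : τ.symbols) (a : Fin (τ.arity s) → D),
      (∑ g : D → C, (((ν g : ℝ)) : EReal) * QInf.toE (Γ s (g ∘ a))) ≤
        QInf.toE (Δ s a)

/-- A cyclic operation: `f(x_1,…,x_ℓ) = f(x_2,…,x_ℓ,x_1)`. -/
def IsCyclicOp {C : Type} {ℓ : ℕ} (f : (Fin ℓ → C) → C) : Prop :=
  ∀ x : Fin ℓ → C, f x = f (x ∘ finRotate ℓ)

/-- A valued structure over a finite domain is a core: every unary operation in the
support of a fractional polymorphism is injective. -/
def FinIsCore {τ : Signature} {C : Type} [Fintype C] [DecidableEq C]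
    (Γ : VStruct τ C) : Prop :=
  ∀ w : ((Fin 1 → C) → C) → ℝ≥0, FinFracPol Γ w →
    ∀ f, w f ≠ 0 → Function.Injective f

namespace CoreAux

/-- The weighted sum of values is at most `x`. -/
def Good {ι : Type} [Fintype ι] (μ : ι → ℝ≥0) (v : ι → QInf) (x : QInf) : Prop :=
  (∑ i, ((μ i : ℝ) : EReal) * QInf.toE (v i)) ≤ QInf.toE x

/-- Real part of a value. -/
noncomputable def toR (x : QInf) : ℝ := (QInf.toE x).toReal

lemma toE_top : QInf.toE ⊤ = ⊤ := rfl

lemma toE_coe (q : ℚ) : QInf.toE (q : QInf) = ((q : ℝ) : EReal) := rfl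

lemma toE_eq {x : QInf} (h : x ≠ ⊤) : QInf.toE x = ((toR x : ℝ) : EReal) := by
  induction x using WithTop.recTopCoe with
  | top => exact absurd rfl h
  | coe q => simp [toR, toE_coe]

lemma toE_ne_bot (x : QInf) : QInf.toE x ≠ ⊥ := by
  induction x using WithTop.recTopCoe with
  | top => simp [toE_top]
  | coe q => simp [toE_coe]

lemma coe_fsum {ι : Type} (s : Finset ι) (f : ι → ℝ) :
    ((∑ i ∈ s, f i : ℝ) : EReal) = ∑ i ∈ s, ((f i : ℝ) : EReal) := by
  classical
  induction s using Finset.induction_on with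
  | empty => simp
  | insert a s ha ih => simp [Finset.sum_insert ha, ih]

lemma term_ne_bot (m : ℝ≥0) (x : QInf) : ((m : ℝ) : EReal) * QInf.toE x ≠ ⊥ := by
  by_cases hx : x = ⊤
  · subst hx
    by_cases hm : m = 0
    · simp [hm]
    · rw [toE_top, EReal.coe_mul_top_of_pos (by positivity)]; simp
  · rw [toE_eq hx, ← EReal.coe_mul]; exact EReal.coe_ne_bot _

lemma good_iff {ι : Type} [Fintype ι] (μ : ι → ℝ≥0) (v : ι → QInf) (x : QInf) :
    Good μ v x ↔ (x ≠ ⊤ → (∀ i, v i = ⊤ → μ i = 0) ∧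
      ∑ i, (μ i : ℝ) * toR (v i) ≤ toR x) := by
  classical
  by_cases hx : x = ⊤
  · subst hx; simp [Good, toE_top]
  by_cases h : ∀ i, v i = ⊤ → μ i = 0
  · have : ∀ i, ((μ i : ℝ) : EReal) * QInf.toE (v i) = (((μ i : ℝ) * toR (v i) : ℝ) : EReal) := by
      intro i
      by_cases hv : v i = ⊤
      · simp [h i hv]
      · rw [toE_eq hv, EReal.coe_mul]
    unfold Good
    rw [Finset.sum_congr rfl (fun i _ => this i), ← coe_fsum, toE_eq hx, EReal.coe_le_coe_iff]
    tauto
  · have hn : ¬ Good μ v x := by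
      push Not at h
      obtain ⟨i, hi, hm⟩ := h
      unfold Good
      have hr : ∑ j ∈ Finset.univ.erase i, ((μ j : ℝ) : EReal) * QInf.toE (v j) ≠ ⊥ := by
        refine Finset.sum_induction _ (fun y : EReal => y ≠ ⊥) ?_ (by simp) ?_
        · intro a b ha hb; simp [EReal.add_eq_bot_iff, ha, hb]
        · intro j _; exact term_ne_bot _ _
      rw [← Finset.add_sum_erase _ _ (Finset.mem_univ i), hi, toE_top,
        EReal.coe_mul_top_of_pos (by positivity), EReal.top_add_of_ne_bot hr, toE_eq hx]
      simp
    tauto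

/-- Push-forward of a weight function. -/
noncomputable def push {ι κ : Type} [Fintype ι] [DecidableEq κ] (φ : ι → κ) (μ : ι → ℝ≥0) (j : κ) :
    ℝ≥0 :=
  ∑ i, if φ i = j then μ i else 0

lemma push_sum {ι κ : Type} [Fintype ι] [Fintype κ] [DecidableEq κ] (φ : ι → κ) (μ : ι → ℝ≥0)
    (F : κ → ℝ) : ∑ j, (push φ μ j : ℝ) * F j = ∑ i, (μ i : ℝ) * F (φ i) := by
  simp only [push, NNReal.coe_sum, Finset.sum_mul]
  rw [Finset.sum_comm]
  refine Finset.sum_congr rfl fun i _ => ?_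
  rw [Finset.sum_eq_single (φ i)]
  · simp
  · intro j _ hj; simp [hj.symm]
  · simp

lemma push_dist {ι κ : Type} [Fintype ι] [Fintype κ] [DecidableEq κ] (φ : ι → κ) {μ : ι → ℝ≥0}
    (h : FinDist μ) : FinDist (push φ μ) := by
  have := push_sum φ μ (fun _ => 1)
  unfold FinDist at *
  rw [← NNReal.coe_inj] at *
  push_cast at *
  simpa [h] using this

lemma push_good {ι κ : Type} [Fintype ι] [Fintype κ] [DecidableEq κ] (φ : ι → κ) {μ : ι → ℝ≥0}
    {u : ι → QInf} {v : κ → QInf} {x : QInf} (h : Good μ u x)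
    (huv : ∀ i, μ i ≠ 0 → v (φ i) = u i) : Good (push φ μ) v x := by
  rw [good_iff] at *
  intro hx
  obtain ⟨h1, h2⟩ := h hx
  constructor
  · intro j hj
    unfold push
    refine Finset.sum_eq_zero fun i _ => ?_
    split_ifs with hij
    · by_contra hm
      exact hm (h1 i (by rw [← huv i hm, hij, hj]))
    · rfl
  · rw [push_sum φ μ (fun j => toR (v j))]
    refine le_trans (le_of_eq (Finset.sum_congr rfl fun i _ => ?_)) h2
    by_cases hm : μ i = 0
    · simp [hm]
    · rw [huv i hm]

lemma bind_dist {ι κ : Type} [Fintype ι] [Fintype κ] {μ : ι → ℝ≥0} {K : ι → κ → ℝ≥0}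
    (h : FinDist μ) (hK : ∀ i, FinDist (K i)) :
    FinDist (fun p : ι × κ => μ p.1 * K p.1 p.2) := by
  unfold FinDist at *
  rw [Fintype.sum_prod_type]
  simp [← Finset.mul_sum, hK, h]

lemma bind_good {ι κ : Type} [Fintype ι] [Fintype κ] {μ : ι → ℝ≥0} {K : ι → κ → ℝ≥0}
    {u : ι → QInf} {v : ι → κ → QInf} {x : QInf} (h : Good μ u x)
    (hK : ∀ i, Good (K i) (v i) (u i)) :
    Good (fun p : ι × κ => μ p.1 * K p.1 p.2) (fun p => v p.1 p.2) x := by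
  rw [good_iff] at *
  intro hx
  obtain ⟨h1, h2⟩ := h hx
  have hK' := fun i => (good_iff _ _ _).1 (hK i)
  constructor
  · rintro ⟨i, k⟩ hv
    by_cases hu : u i = ⊤
    · simp [h1 i hu]
    · simp [(hK' i hu).1 k hv]
  · rw [Fintype.sum_prod_type]
    refine le_trans (Finset.sum_le_sum fun i _ => ?_) h2
    by_cases hu : u i = ⊤
    · simp [h1 i hu]
    · have := mul_le_mul_of_nonneg_left (hK' i hu).2 (μ i).coe_nonneg
      rw [Finset.mul_sum] at this
      simpa [mul_assoc] using this

lemma good_closed {ι : Type} [Fintype ι] (v : ι → QInf) (x : QInf) :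
    IsClosed {μ : ι → ℝ≥0 | Good μ v x} := by
  by_cases hx : x = ⊤
  · have : {μ : ι → ℝ≥0 | Good μ v x} = Set.univ := by
      ext μ; simp [good_iff, hx]
    rw [this]; exact isClosed_univ
  · have : {μ : ι → ℝ≥0 | Good μ v x} = (⋂ i, ⋂ (_ : v i = ⊤), {μ : ι → ℝ≥0 | μ i = 0}) ∩
        {μ | ∑ i, (μ i : ℝ) * toR (v i) ≤ toR x} := by
      ext μ; simp [good_iff, hx]
    rw [this]
    refine IsClosed.inter (isClosed_iInter fun i => isClosed_iInter fun _ => ?_) ?_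
    · exact isClosed_eq (by fun_prop) (by fun_prop)
    · exact isClosed_le (by fun_prop) (by fun_prop)

lemma dirac_dist {ι : Type} [Fintype ι] [DecidableEq ι] (i : ι) :
    FinDist (Pi.single i 1 : ι → ℝ≥0) := by
  simp [FinDist]

lemma dirac_good {ι : Type} [Fintype ι] [DecidableEq ι] (i : ι) (v : ι → QInf) :
    Good (Pi.single i 1 : ι → ℝ≥0) v (v i) := by
  rw [good_iff]
  intro hx
  constructor
  · intro j hj
    have : j ≠ i := by rintro rfl; exact hx hj
    simp [this]
  · rw [Finset.sum_eq_single i]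
    · simp
    · intro j _ hj; simp [hj]
    · simp

/-- Fractional homomorphism, phrased with `Good`. -/
def Hom {τ : Signature} {D C : Type} [Fintype D] [DecidableEq D] [Fintype C]
    (Δ : VStruct τ D) (Γ : VStruct τ C) (ν : (D → C) → ℝ≥0) : Prop :=
  FinDist ν ∧ ∀ (s : τ.symbols) (a : Fin (τ.arity s) → D),
    Good ν (fun g => Γ s (g ∘ a)) (Δ s a)

/-- Composition of a weight function with a kernel. -/
noncomputable def comp {C D E : Type} [Fintype C] [DecidableEq C] [Fintype D] [DecidableEq D]
    [DecidableEq E] [Fintype E] (μ : (C → D) → ℝ≥0) (K : (C → D) → (D → E) → ℝ≥0) :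
    (C → E) → ℝ≥0 :=
  push (fun p : (C → D) × (D → E) => p.2 ∘ p.1) (fun p => μ p.1 * K p.1 p.2)

lemma comp_hom {τ : Signature} {C D E : Type} [Fintype C] [DecidableEq C] [Fintype D]
    [DecidableEq D] [DecidableEq E] [Fintype E] {Γ : VStruct τ C} {Δ : VStruct τ D}
    {Θ : VStruct τ E} {μ : (C → D) → ℝ≥0} {K : (C → D) → (D → E) → ℝ≥0}
    (h : Hom Γ Δ μ) (hK : ∀ g, Hom Δ Θ (K g)) : Hom Γ Θ (comp μ K) := by
  refine ⟨push_dist _ (bind_dist h.1 fun g => (hK g).1), fun s a => ?_⟩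
  exact push_good _ (bind_good (h.2 s a) (v := fun g k => Θ s (k ∘ g ∘ a))
    fun g => (hK g).2 s (g ∘ a)) (fun p _ => rfl)

lemma dirac_hom {τ : Signature} {D C : Type} [Fintype D] [DecidableEq D] [Fintype C]
    [DecidableEq C] (Γ : VStruct τ C) (i : D → C) :
    Hom (fun s a => Γ s (i ∘ a) : VStruct τ D) Γ (Pi.single i 1) :=
  ⟨dirac_dist _, fun s a => dirac_good i (fun g => Γ s (g ∘ a))⟩

/-- If `g` is in the support of a unary fractional polymorphism, then there is a fractional
polymorphism supported on maps into the range of `g`. -/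
lemma exists_into_range {τ : Signature} {C : Type} [Fintype C] [DecidableEq C]
    (Γ : VStruct τ C) (ω : (C → C) → ℝ≥0) (hω : Hom Γ Γ ω) (g : C → C) (hg : ω g ≠ 0) :
    ∃ μ, Hom Γ Γ μ ∧ ∀ h, μ h ≠ 0 → ∀ c, h c ∈ Set.range g := by
  classical
  let P : (C → C) → Prop := fun h => ∀ c, h c ∈ Set.range g
  let F : (C → C) → ℝ := fun h => if P h then 1 else 0
  let m : ((C → C) → ℝ≥0) → ℝ := fun μ => ∑ h, (μ h : ℝ) * F h
  have hclosed : IsClosed {μ | Hom Γ Γ μ} := by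
    have : {μ | Hom Γ Γ μ} = {μ | ∑ h, μ h = 1} ∩
        ⋂ s, ⋂ a, {μ | Good μ (fun g => Γ s (g ∘ a)) (Γ s a)} := by
      ext μ; simp [Hom, FinDist]
    rw [this]
    refine IsClosed.inter (isClosed_eq (by fun_prop) (by fun_prop)) ?_
    exact isClosed_iInter fun s => isClosed_iInter fun a => good_closed _ _
  have hcomp : IsCompact {μ | Hom Γ Γ μ} := by
    refine IsCompact.of_isClosed_subset (isCompact_Icc (a := (0 : (C → C) → ℝ≥0)) (b := 1))
      hclosed ?_
    intro μ hμ
    refine ⟨fun h => zero_le, fun h => ?_⟩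
    have h1 : ∑ h, μ h = 1 := hμ.1
    rw [Pi.one_apply, ← h1]
    exact Finset.single_le_sum (fun _ _ => zero_le) (Finset.mem_univ h)
  obtain ⟨μ, hμ, hmax⟩ := hcomp.exists_isMaxOn ⟨ω, hω⟩
    (f := m) (by fun_prop)
  refine ⟨μ, hμ, ?_⟩
  by_contra hcon
  push Not at hcon
  obtain ⟨h0, hh0, hP0⟩ := hcon
  have hP0 : ¬ P h0 := by simpa [P] using hP0
  let K : (C → C) → (C → C) → ℝ≥0 := fun h => if P h then Pi.single id 1 else ω
  have hK : ∀ h, Hom Γ Γ (K h) := by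
    intro h
    by_cases hh : P h
    · simp only [K, if_pos hh]; exact dirac_hom Γ id
    · simp only [K, if_neg hh]; exact hω
  have hle : m (comp μ K) ≤ m μ := hmax (comp_hom hμ hK)
  have heq : m (comp μ K) = ∑ h, (μ h : ℝ) * ∑ k, (K h k : ℝ) * F (k ∘ h) := by
    simp only [m, comp]
    rw [push_sum, Fintype.sum_prod_type]
    simp [Finset.mul_sum, mul_assoc]
  have hF0 : ∀ h, 0 ≤ F h := fun h => by simp only [F]; split_ifs <;> norm_num
  have key : ∀ h, F h ≤ ∑ k, (K h k : ℝ) * F (k ∘ h) := by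
    intro h
    by_cases hh : P h
    · have : (K h id : ℝ) * F (id ∘ h) = F h := by simp [K, hh]
      rw [← this]
      exact Finset.single_le_sum (f := fun k => (K h k : ℝ) * F (k ∘ h))
        (fun k _ => mul_nonneg (K h k).coe_nonneg (hF0 _)) (Finset.mem_univ id)
    · have : F h = 0 := by simp [F, hh]
      rw [this]
      exact Finset.sum_nonneg fun k _ => mul_nonneg (K h k).coe_nonneg (hF0 _)
  have key0 : F h0 < ∑ k, (K h0 k : ℝ) * F (k ∘ h0) := by
    have h1 : F h0 = 0 := by simp [F, hP0]
    have h2 : (K h0 g : ℝ) * F (g ∘ h0) = ω g := by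
      have : P (g ∘ h0) := fun c => ⟨h0 c, rfl⟩
      simp [K, hP0, F, this]
    have h3 := Finset.single_le_sum (f := fun k => (K h0 k : ℝ) * F (k ∘ h0))
        (fun k _ => mul_nonneg (K h0 k).coe_nonneg (hF0 _)) (Finset.mem_univ g)
    have h4 : (0 : ℝ) < ω g := by positivity
    simp only [h2] at h3
    linarith
  have : m μ < m (comp μ K) := by
    rw [heq]
    refine Finset.sum_lt_sum (fun h _ => mul_le_mul_of_nonneg_left (key h) (μ h).coe_nonneg)
      ⟨h0, Finset.mem_univ _, ?_⟩
    exact mul_lt_mul_of_pos_left key0 (by positivity)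
  linarith

/-- A non-core structure is equivalent to a structure on a proper subset. -/
lemma step {τ : Signature} {C : Type} [Fintype C] [DecidableEq C]
    (Γ : VStruct τ C) (ω : (C → C) → ℝ≥0) (hω : Hom Γ Γ ω) (g : C → C) (hg : ω g ≠ 0) :
    ∃ ν, Hom Γ (fun s a => Γ s (Subtype.val ∘ a) : VStruct τ (Set.range g)) ν := by
  classical
  obtain ⟨μ, hμ, hs⟩ := exists_into_range Γ ω hω g hg
  let φ : (C → C) → (C → Set.range g) := fun h =>
    if hh : ∀ c, h c ∈ Set.range g then fun c => ⟨h c, hh c⟩ else fun c => ⟨g c, c, rfl⟩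
  refine ⟨push φ μ, push_dist _ hμ.1, fun s a => push_good φ (hμ.2 s a) ?_⟩
  intro h hh
  have : φ h = fun c => ⟨h c, hs h hh c⟩ := by simp only [φ]; rw [dif_pos (hs h hh)]
  rw [this]; rfl

lemma unary {τ : Signature} {C : Type} [Fintype C] [DecidableEq C]
    (Γ : VStruct τ C) (w : ((Fin 1 → C) → C) → ℝ≥0) (hw : FinFracPol Γ w) :
    Hom Γ Γ (push (fun f c => f fun _ => c) w) := by
  refine ⟨push_dist _ hw.1, fun s a => ?_⟩
  have := hw.2 s (fun _ => a)
  refine push_good (u := fun f => Γ s fun i => f fun _ => a i) _ ?_ (fun f _ => rfl)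
  simpa [Good] using this

lemma main {τ : Signature} (n : ℕ) : ∀ {C : Type} [Fintype C] [DecidableEq C]
    (_ : Fintype.card C ≤ n) (Γ : VStruct τ C),
    ∃ (D : Type) (iD : Fintype D) (dD : DecidableEq D) (Δ : VStruct τ D),
      FinIsCore Δ ∧ (∃ ν, Hom Γ Δ ν) ∧ (∃ ν, Hom Δ Γ ν) := by
  induction n with
  | zero =>
    intro C _ _ hC Γ
    have : IsEmpty C := Fintype.card_eq_zero_iff.1 (by omega)
    exact ⟨C, inferInstance, inferInstance, Γ, fun w _ f _ x => isEmptyElim (f x),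
      ⟨_, dirac_hom Γ id⟩, ⟨_, dirac_hom Γ id⟩⟩
  | succ n ih =>
    intro C _ _ hC Γ
    by_cases hcore : FinIsCore Γ
    · exact ⟨C, inferInstance, inferInstance, Γ, hcore,
        ⟨_, dirac_hom Γ id⟩, ⟨_, dirac_hom Γ id⟩⟩
    unfold FinIsCore at hcore
    push Not at hcore
    obtain ⟨w, hw, f, hf, hinj⟩ := hcore
    let g : C → C := fun c => f fun _ => c
    have hgw : push (fun f c => f fun _ => c) w g ≠ 0 := by
      have h1 : w f ≤ push (fun f c => f fun _ => c) w g := by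
        have := Finset.single_le_sum
          (f := fun i : (Fin 1 → C) → C => if (fun c => i fun _ => c) = g then w i else 0)
          (fun _ _ => zero_le) (Finset.mem_univ f)
        simpa [g, push] using this
      exact ((pos_iff_ne_zero.2 hf).trans_le h1).ne'
    obtain ⟨ν, hν⟩ := step Γ _ (unary Γ w hw) g hgw
    have hginj : ¬ Function.Injective g := by
      intro hi
      apply hinj
      intro x y hxy
      have hx : (fun _ => x 0) = x := by ext i; rw [Subsingleton.elim i 0]
      have hy : (fun _ => y 0) = y := by ext i; rw [Subsingleton.elim i 0]
      have : x 0 = y 0 := hi (by simp only [g]; rw [hx, hy, hxy])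
      rw [← hx, ← hy, this]
    have hcard : Fintype.card (Set.range g) < Fintype.card C := by
      have hsurj : ¬ Function.Surjective g := fun hs => hginj (Finite.injective_iff_surjective.2 hs)
      unfold Function.Surjective at hsurj
      push Not at hsurj
      obtain ⟨b, hb⟩ := hsurj
      exact Fintype.card_subtype_lt (p := fun x => x ∈ Set.range g) (x := b)
        (by rintro ⟨a, ha⟩; exact hb a ha)
    obtain ⟨D, iD, dD, Δ, hc, ⟨ν1, h1⟩, ⟨ν2, h2⟩⟩ := ih (C := Set.range g) (by omega)
      (fun s a => Γ s (Subtype.val ∘ a))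
    exact ⟨D, iD, dD, Δ, hc, ⟨_, comp_hom hν fun _ => h1⟩,
      ⟨_, comp_hom h2 fun _ => dirac_hom Γ Subtype.val⟩⟩

end CoreAux

/-- every valued structure `Γ` with a finite domain is fractionally
homomorphically equivalent to a core valued structure `Δ` with a finite domain (and the
same signature). -/
theorem exists_core_equiv {τ : Signature} {C : Type} [Fintype C] [DecidableEq C]
    (Γ : VStruct τ C) :
    ∃ (D : Type) (iD : Fintype D) (dD : DecidableEq D) (Δ : VStruct τ D),
      (@FinIsCore τ D iD dD Δ) ∧
      (∃ ν : (C → D) → ℝ≥0, @FinFracHom τ C D ‹Fintype C› ‹DecidableEq C› iD Γ Δ ν) ∧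
      (∃ ν : (D → C) → ℝ≥0, @FinFracHom τ D C iD dD ‹Fintype C› Δ Γ ν) := by
  obtain ⟨D, iD, dD, Δ, hc, h1, h2⟩ := CoreAux.main _ le_rfl Γ
  exact ⟨D, iD, dD, Δ, hc, h1, h2⟩
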